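/- Under these hypotheses, there is a unique k-linear map ε : Hom_A(J, A) → k such that (1_A ⊗ ε)(u) = 1 in A, where u ∈ A ⊗[k] Hom_A(J, A) is the unique element corresponding to the inclusion J ↪ A ⊗[k] A under the bijective A-linear map m : A ⊗[k] Hom_A(J,A) → Hom_A(J, A ⊗[k] A) given by m(a ⊗ λ)(e) = a ⊗ λ(e) (here A ⊗[k] A is an A-module via the second factor). Moreover this ε satisfies ε((1⊗φ)|_J) = φ(1) for every φ ∈ A^∨ = Hom_k(A,k). -/

import Mathlib

open TensorProduct

noncomputable section

variable (k A : Type*) [CommRing k] [CommRing A] [Algebra k A]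

/-- `I`, the kernel of the multiplication map `μ : A ⊗[k] A → A`, as an ideal of `A ⊗[k] A`. -/
def Imul : Ideal (A ⊗[k] A) := RingHom.ker (Algebra.TensorProduct.lmul' k (S := A))

/-- `J = Ann_{A ⊗[k] A}(I)`, the annihilator of `I`.  Via the instance
`Algebra A (A ⊗[k] A)` given by `a ↦ a ⊗ 1`, the ideal `J` is an `A`-module. -/
def Jann : Ideal (A ⊗[k] A) := Submodule.annihilator (Imul k A)

/-- The `k`-linear map `1 ⊗ φ : A ⊗[k] A → A`, `a ⊗ b ↦ φ(b)·a`. -/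
def oneTensorMap (φ : Module.Dual k A) : A ⊗[k] A →ₗ[k] A :=
  TensorProduct.lift (LinearMap.flip ((LinearMap.lsmul k A).comp φ))

/-- Evaluation at `x ∈ J` as a `k`-linear map `Hom_A(J, A) → A`. -/
def evalAt (x : ↥(Jann k A)) : (↥(Jann k A) →ₗ[A] A) →ₗ[k] A where
  toFun l := l x
  map_add' l l' := rfl
  map_smul' c l := rfl

theorem otm_tmul (φ : Module.Dual k A) (a b : A) : oneTensorMap k A φ (a ⊗ₜ b) = φ b • a := by
  simp [oneTensorMap]

theorem otm_rid (φ : Module.Dual k A) (x : A ⊗[k] A) :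
    (TensorProduct.rid k A) (LinearMap.lTensor A φ x) = oneTensorMap k A φ x := by
  induction x with
  | zero => simp
  | tmul a b => simp [otm_tmul]
  | add x y hx hy => simp [hx, hy]

theorem otm_smul (φ : Module.Dual k A) (c : A) (x : A ⊗[k] A) :
    oneTensorMap k A φ (c • x) = c * oneTensorMap k A φ x := by
  induction x with
  | zero => simp
  | tmul a b => simp [otm_tmul, TensorProduct.smul_tmul']
  | add x y hx hy => simp [hx, hy, mul_add]

theorem otm_mulRight (φ : Module.Dual k A) (c : A) (x : A ⊗[k] A) :
    oneTensorMap k A (φ ∘ₗ LinearMap.mulLeft k c) x = oneTensorMap k A φ ((1 ⊗ₜ c) * x) := by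
  induction x with
  | zero => simp
  | tmul a b => simp [otm_tmul]
  | add x y hx hy => simp only [map_add, hx, hy, mul_add]

theorem otm_sum {n : ℕ} (φ : Fin n → Module.Dual k A) (x : A ⊗[k] A) :
    oneTensorMap k A (∑ i, φ i) x = ∑ i, oneTensorMap k A (φ i) x := by
  induction x with
  | zero => simp
  | tmul a b => simp [otm_tmul, Finset.sum_smul]
  | add x y hx hy => simp only [map_add, hx, hy, Finset.sum_add_distrib]

theorem Jann_mul {x : A ⊗[k] A} (hx : x ∈ Jann k A) {y : A ⊗[k] A} (hy : y ∈ Imul k A) :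
    x * y = 0 := by
  have := (Submodule.mem_annihilator.mp hx) y hy
  simpa using this

theorem Jann_right {x : A ⊗[k] A} (hx : x ∈ Jann k A) (c : A) :
    ((1 : A) ⊗ₜ[k] c) * x = c • x := by
  have h : ((1 : A) ⊗ₜ[k] c - c ⊗ₜ 1) ∈ Imul k A := by
    simp [Imul, RingHom.mem_ker]
  have h2 := Jann_mul k A hx h
  rw [Algebra.smul_def, Algebra.TensorProduct.algebraMap_apply]
  simp only [Algebra.algebraMap_self, RingHom.id_apply]
  linear_combination h2

theorem sub_mem_Imul (y : A ⊗[k] A) :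
    y - (Algebra.TensorProduct.lmul' k (S := A) y) ⊗ₜ 1 ∈ Imul k A := by
  simp [Imul, RingHom.mem_ker]

theorem Jann_mul_eq {x : A ⊗[k] A} (hx : x ∈ Jann k A) (y : A ⊗[k] A) :
    y * x = (Algebra.TensorProduct.lmul' k (S := A) y) • x := by
  have h2 := Jann_mul k A hx (sub_mem_Imul k A y)
  rw [Algebra.smul_def, Algebra.TensorProduct.algebraMap_apply]
  simp only [Algebra.algebraMap_self, RingHom.id_apply]
  linear_combination h2

/-- Multiplication as a linear map over the first factor. -/
def muA : A ⊗[k] A →ₗ[A] A where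
  toFun y := Algebra.TensorProduct.lmul' k (S := A) y
  map_add' := by simp
  map_smul' := by
    intro c x
    rw [Algebra.smul_def, Algebra.TensorProduct.algebraMap_apply]
    simp

/-- The structure map `a ↦ a ⊗ 1` as a linear map. -/
def iotaA : A →ₗ[A] A ⊗[k] A := Algebra.linearMap A (A ⊗[k] A)

theorem exists_psi [Module.Finite k A] [Module.Projective k A]
    (hI : (Imul k A).IsPrincipal) (g : A ⊗[k] A) (hg : Jann k A = Ideal.span {g}) :
    ∃ ψ : A ⊗[k] A →ₗ[A] A, ψ g = 1 := by
  obtain ⟨f, hf⟩ := hI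
  have hfI : f ∈ Imul k A := by rw [hf]; exact Submodule.mem_span_singleton_self f
  have hμf : ∀ y, muA k A (f * y) = 0 := by
    intro y
    have : f * y ∈ Imul k A := Ideal.mul_mem_right _ _ hfI
    exact this
  have hgJ : g ∈ Jann k A := by rw [hg]; exact Ideal.mem_span_singleton_self g
  let IA : Submodule A (A ⊗[k] A) := (Imul k A).restrictScalars A
  let F : A ⊗[k] A →ₗ[A] IA :=
    (LinearMap.mulLeft A f).codRestrict IA (fun y => Ideal.mul_mem_right _ _ hfI)
  have hF : Function.Surjective F := by
    rintro ⟨y, hy⟩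
    have hy' : y ∈ Imul k A := hy
    rw [hf] at hy'
    obtain ⟨c, hc⟩ := Submodule.mem_span_singleton.mp hy'
    refine ⟨c, Subtype.ext ?_⟩
    change f * c = y
    rw [← hc, smul_eq_mul, mul_comm]
  let G : A ⊗[k] A →ₗ[A] IA :=
    (LinearMap.id - iotaA k A ∘ₗ muA k A).codRestrict IA (fun y => sub_mem_Imul k A y)
  obtain ⟨h, hh⟩ := Module.projective_lifting_property F G hF
  have hh' : ∀ y, f * h y = y - iotaA k A (muA k A y) := fun y =>
    congrArg Subtype.val (LinearMap.congr_fun hh y)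
  let h' := h ∘ₗ (LinearMap.id - iotaA k A ∘ₗ muA k A)
  let T : A ⊗[k] A →ₗ[A] A ⊗[k] A := (muA k A).smulRight g + h'
  have hT : Function.Surjective T := by
    intro q
    have hJ : q - h (f * q) ∈ Jann k A := by
      refine Submodule.mem_annihilator.mpr ?_
      intro y hy
      rw [hf] at hy
      obtain ⟨c, rfl⟩ := Submodule.mem_span_singleton.mp hy
      have h1 := hh' (f * q)
      rw [hμf, map_zero, sub_zero] at h1
      simp only [smul_eq_mul]
      linear_combination (-c) * h1
    rw [hg] at hJ
    obtain ⟨c, hc⟩ := Ideal.mem_span_singleton'.mp hJ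
    rw [Jann_mul_eq k A hgJ] at hc
    have hmi : ∀ a, muA k A (iotaA k A a) = a := by intro a; simp [muA, iotaA]
    refine ⟨iotaA k A (muA k A c) + f * q, ?_⟩
    have : muA k A (iotaA k A (muA k A c) + f * q) = muA k A c := by
      rw [map_add, hμf, hmi, add_zero]
    simp only [T, h', LinearMap.add_apply, LinearMap.smulRight_apply, LinearMap.comp_apply,
      LinearMap.sub_apply, LinearMap.id_apply, this, add_sub_cancel_left]
    change (Algebra.TensorProduct.lmul' k (S := A) c) • g + _ = _
    rw [hc]; ring
  have hTi : Function.Injective T := OrzechProperty.injective_of_surjective_endomorphism T hT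
  let E := LinearEquiv.ofBijective T ⟨hTi, hT⟩
  refine ⟨muA k A ∘ₗ E.symm.toLinearMap, ?_⟩
  have hm1 : muA k A 1 = 1 := by simp [muA]
  have : E 1 = g := by
    change T 1 = g
    have hi1 : iotaA k A 1 = 1 := by
      simp [iotaA, Algebra.TensorProduct.one_def]
    simp [T, h', hm1, hi1]
  simp [← this, hm1]

theorem exists_eps [Module.Finite k A] [Module.Projective k A]
    (g : A ⊗[k] A) (hg : g ∈ Jann k A) (ψ : A ⊗[k] A →ₗ[A] A) (hψ : ψ g = 1) :
    ∃ ε : Module.Dual k A, oneTensorMap k A ε g = 1 := by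
  obtain ⟨n, p, s, -, -, hps⟩ := Module.Finite.exists_comp_eq_id_of_projective k A
  let b : Fin n → A := fun i => p (Pi.single i 1)
  let φ : Fin n → Module.Dual k A := fun i => LinearMap.proj i ∘ₗ s
  have hb : ∀ x, ∑ i, φ i x • b i = x := by
    intro x
    conv_rhs => rw [← LinearMap.id_apply (R := k) x, ← hps, LinearMap.comp_apply]
    conv_rhs => rw [pi_eq_sum_univ' (s x)]
    simp [φ, b, map_sum]
  have key : ∀ y, ψ y = ∑ i, ψ (1 ⊗ₜ b i) * oneTensorMap k A (φ i) y := by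
    intro y
    induction y with
    | zero => simp
    | add x y hx hy => simp only [map_add, hx, hy, mul_add, Finset.sum_add_distrib]
    | tmul a x =>
      have h1 : a ⊗ₜ[k] x = ∑ i, (φ i x • a) • ((1 : A) ⊗ₜ[k] b i) := by
        conv_lhs => rw [← hb x]
        rw [TensorProduct.tmul_sum]
        refine Finset.sum_congr rfl fun i _ => ?_
        simp [TensorProduct.smul_tmul']
      rw [h1, map_sum]
      refine Finset.sum_congr rfl fun i _ => ?_
      rw [map_smul, ← h1, otm_tmul, smul_eq_mul, mul_comm]
  refine ⟨∑ i, φ i ∘ₗ LinearMap.mulLeft k (ψ (1 ⊗ₜ b i)), ?_⟩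
  rw [otm_sum]
  refine Eq.trans ?_ ((key g).symm.trans hψ)
  refine Finset.sum_congr rfl fun i _ => ?_
  rw [otm_mulRight, Jann_right k A hg, otm_smul]

theorem eps_dual [Module.Finite k A] [Module.Projective k A]
    (g : A ⊗[k] A) (hg : g ∈ Jann k A) (ε : Module.Dual k A) (hε : oneTensorMap k A ε g = 1)
    (φ : Module.Dual k A) : φ = ε ∘ₗ LinearMap.mulLeft k (oneTensorMap k A φ g) := by
  have h1 : ∀ c, oneTensorMap k A (ε ∘ₗ LinearMap.mulLeft k c) g = c := by
    intro c
    rw [otm_mulRight, Jann_right k A hg, otm_smul, hε, mul_one]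
  let Φ : Module.Dual k A →ₗ[k] A :=
    { toFun := fun φ => oneTensorMap k A φ g
      map_add' := fun a b => by
        simp only [← otm_rid, LinearMap.lTensor_add, LinearMap.add_apply, map_add]
      map_smul' := fun a b => by
        simp only [← otm_rid, LinearMap.lTensor_smul, LinearMap.smul_apply, map_smul,
          RingHom.id_apply] }
  obtain ⟨c, hc⟩ := (Module.bijective_dual_eval k A).2 (φ ∘ₗ Φ)
  have h2 : φ = ε ∘ₗ LinearMap.mulLeft k c := by
    ext b
    have h3 := LinearMap.congr_fun hc (ε ∘ₗ LinearMap.mulLeft k b)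
    simp only [Module.Dual.eval_apply, LinearMap.comp_apply, LinearMap.mulLeft_apply] at h3 ⊢
    have h4 : Φ (ε ∘ₗ LinearMap.mulLeft k b) = b := h1 b
    rw [h4] at h3
    rw [← h3, mul_comm]
  have h5 : oneTensorMap k A φ g = c := by rw [h2, h1]
  rw [h5]; exact h2

/-- Let `k` be a commutative ring and `A` a commutative `k`-algebra which, as
a `k`-module, is finitely generated projective of constant rank `r`, with `I = ker(μ)` and
`J = Ann(I)` principal.  Let `u ∈ A ⊗[k] Hom_A(J, A)` be the (unique) element corresponding to
the inclusion `J ↪ A ⊗[k] A` under the map `m : A ⊗[k] Hom_A(J,A) → Hom_A(J, A ⊗[k] A)`,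
`m(a ⊗ λ)(e) = a ⊗ λ(e)`; i.e. `(1 ⊗ evalAt x)(u) = x` for all `x ∈ J`.  Then there is a
unique `k`-linear map `ε : Hom_A(J, A) → k` with `(1_A ⊗ ε)(u) = 1` in `A` (after the
canonical identification `A ⊗[k] k ≅ A`), and moreover this `ε` satisfies
`ε((1⊗φ)|_J) = φ(1)` for every `φ ∈ A^∨ = Hom_k(A, k)`. -/
theorem stmt4 (r : ℕ) [Module.Finite k A] [Module.Projective k A]
    (hrank : ∀ (p : Ideal k) [p.IsPrime],
      Nonempty (LocalizedModule p.primeCompl A ≃ₗ[Localization p.primeCompl]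
        (Fin r → Localization p.primeCompl)))
    (hI : (Imul k A).IsPrincipal) (hJ : (Jann k A).IsPrincipal)
    (u : A ⊗[k] (↥(Jann k A) →ₗ[A] A))
    (hu : ∀ x : ↥(Jann k A), LinearMap.lTensor A (evalAt k A x) u = (x : A ⊗[k] A)) :
    ∃ ε : (↥(Jann k A) →ₗ[A] A) →ₗ[k] k,
      (TensorProduct.rid k A) (LinearMap.lTensor A ε u) = 1 ∧
        (∀ ε' : (↥(Jann k A) →ₗ[A] A) →ₗ[k] k,
          (TensorProduct.rid k A) (LinearMap.lTensor A ε' u) = 1 → ε' = ε) ∧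
        ∀ (φ : Module.Dual k A) (l : ↥(Jann k A) →ₗ[A] A),
          (∀ x : ↥(Jann k A), l x = oneTensorMap k A φ (x : A ⊗[k] A)) → ε l = φ 1 := by
  obtain ⟨g, hg⟩ := hJ
  have hgJ : g ∈ Jann k A := by rw [hg]; exact Submodule.mem_span_singleton_self g
  obtain ⟨ψ, hψ⟩ := exists_psi k A hI g hg
  obtain ⟨e, he⟩ := exists_eps k A g hgJ ψ hψ
  have hdual := eps_dual k A g hgJ e he
  let g' : ↥(Jann k A) := ⟨g, hgJ⟩
  have hgen : ∀ x : ↥(Jann k A), ∃ a : A, x = a • g' := by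
    rintro ⟨x, hx⟩
    have hx' := hx
    rw [hg] at hx'
    obtain ⟨c, hc⟩ := Submodule.mem_span_singleton.mp hx'
    rw [smul_eq_mul, Jann_mul_eq k A hgJ] at hc
    exact ⟨_, Subtype.ext hc.symm⟩
  let ψJ : ↥(Jann k A) →ₗ[A] A := ψ ∘ₗ ((Jann k A).subtype.restrictScalars A)
  have hψJ : ψJ g' = 1 := hψ
  have hl : ∀ l : ↥(Jann k A) →ₗ[A] A, l = (l g') • ψJ := by
    intro l
    ext x
    obtain ⟨a, rfl⟩ := hgen x
    rw [map_smul, LinearMap.smul_apply, map_smul, hψJ]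
    simp [mul_comm]
  have hcomp : ∀ δ : Module.Dual k A,
      (TensorProduct.rid k A) (LinearMap.lTensor A (δ ∘ₗ evalAt k A g') u)
        = oneTensorMap k A δ g := by
    intro δ
    rw [LinearMap.lTensor_comp, LinearMap.comp_apply, hu, otm_rid]
  refine ⟨e ∘ₗ evalAt k A g', ?_, ?_, ?_⟩
  · rw [hcomp, he]
  · intro ε' hε'
    let δ : Module.Dual k A := ε' ∘ₗ ((LinearMap.toSpanSingleton A _ ψJ).restrictScalars k)
    have h1 : ε' = δ ∘ₗ evalAt k A g' := by
      ext l
      change ε' l = ε' ((l g') • ψJ)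
      rw [← hl]
    rw [h1, hcomp] at hε'
    have h2 := hdual δ
    rw [hε', LinearMap.mulLeft_one, LinearMap.comp_id] at h2
    rw [h1, h2]
  · intro φ l hφ
    change e (l g') = φ 1
    have h3 := LinearMap.congr_fun (hdual φ) 1
    rw [LinearMap.comp_apply, LinearMap.mulLeft_apply, mul_one] at h3
    rw [hφ g', h3]

end
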